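/- Claim 3 in the split-early gadget: under the gadget setup, for every t ∈ F and every standard name n, s_k ∪ {t ≈ n} ⊨ˢ B_{k−1} c^ord_k. -/

import Mathlib

/-! ## Limited belief: basic syntax and semantics (Schwering 2017, quantifier-free). -/

/-- Standard names (a countably infinite supply). -/
abbrev Name := ℕ

/-- Function terms `f(n₁,…,n_j)`: a function symbol applied to standard names. -/
structure FnTerm where
  sym : ℕ
  args : List Name
deriving DecidableEq, Inhabited

/-- Literals `t ≈ n` (pos) and `t ≉ n` (neg). -/
inductive Lit where
  | pos (t : FnTerm) (n : Name)
  | neg (t : FnTerm) (n : Name)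
deriving DecidableEq

instance : Inhabited Lit := ⟨.pos default 0⟩

/-- The left-hand side (function term) of a literal. -/
def Lit.lhs : Lit → FnTerm
  | .pos t _ => t
  | .neg t _ => t

/-- The right-hand side (standard name) of a literal. -/
def Lit.rhs : Lit → Name
  | .pos _ n => n
  | .neg _ n => n

/-- The negation `¬ℓ` of a literal. -/
def Lit.negate : Lit → Lit
  | .pos t n => .neg t n
  | .neg t n => .pos t n

/-- Names occurring in a literal. -/
def Lit.names (ℓ : Lit) : Finset Name := insert ℓ.rhs ℓ.lhs.args.toFinset

/-- Two literals are complementary iff they are of the form `t ≈ n` and `t ≉ n`,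
or of the form `t ≈ n` and `t ≈ n'` for distinct `n, n'`. -/
def Lit.complementary : Lit → Lit → Bool
  | .pos t n, .neg t' n' => t == t' && n == n'
  | .neg t n, .pos t' n' => t == t' && n == n'
  | .pos t n, .pos t' n' => t == t' && n != n'
  | .neg _ _, .neg _ _ => false

/-- A clause is a (finite) set of literals. -/
abbrev Clause := Finset Lit

/-- Unit propagation of clause `c` with literal `ℓ`: remove from `c` all
literals complementary to `ℓ`. -/
def Clause.prop (c : Clause) (ℓ : Lit) : Clause :=
  c.filter (fun ℓ' => Lit.complementary ℓ' ℓ = false)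

/-- `c₁` subsumes `c₂` iff for every `t ≈ n ∈ c₁`, `t ≈ n ∈ c₂` or `t ≉ n' ∈ c₂`
for some `n' ≠ n`, and for every `t ≉ n ∈ c₁`, `t ≉ n ∈ c₂`. -/
def Clause.subsumes (c₁ c₂ : Clause) : Prop :=
  (∀ t n, Lit.pos t n ∈ c₁ → Lit.pos t n ∈ c₂ ∨ ∃ n', n' ≠ n ∧ Lit.neg t n' ∈ c₂) ∧
  (∀ t n, Lit.neg t n ∈ c₁ → Lit.neg t n ∈ c₂)

/-- `UP s`: the closure of the set of clauses `s` under unit propagation and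
subsumption.  `UP s c` means `c ∈ UP(s)`. -/
inductive UP (s : Set Clause) : Clause → Prop
  | mem {c : Clause} : c ∈ s → UP s c
  | unit {c : Clause} {ℓ : Lit} : UP s {ℓ} → UP s c → UP s (c.prop ℓ)
  | sub {c₁ c₂ : Clause} : UP s c₁ → c₁.subsumes c₂ → UP s c₂

/-- Objective formulas: literals (`atom` is `t ≈ n`, `not atom` is `t ≉ n`),
negation and disjunction. -/
inductive Form where
  | atom (t : FnTerm) (n : Name)
  | not (φ : Form)
  | or (φ ψ : Form)
deriving DecidableEq

/-- `α ∧ β` abbreviates `¬(¬α ∨ ¬β)`. -/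
def Form.and (φ ψ : Form) : Form := .not (.or (.not φ) (.not ψ))

/-- `α → β` abbreviates `¬α ∨ β`. -/
def Form.imp (φ ψ : Form) : Form := .or (.not φ) ψ

/-- A formula is (syntactically) a clause iff it is a disjunction of literals. -/
def Form.isClause : Form → Bool
  | .atom _ _ => true
  | .not (.atom _ _) => true
  | .not _ => false
  | .or φ ψ => φ.isClause && ψ.isClause

/-- The set of literals of a clause-formula. -/
def Form.lits : Form → Clause
  | .atom t n => {Lit.pos t n}
  | .not (.atom t n) => {Lit.neg t n}
  | .not _ => ∅
  | .or φ ψ => φ.lits ∪ ψ.lits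

/-- The limited-belief truth relation `s ⊨ˢ α` for objective formulas:
a clause is true iff it is in `UP(s)`; a non-clause disjunction is true iff one
of its disjuncts is; `¬(α ∨ β)` is true iff `¬α` and `¬β` are; `¬¬α` is true
iff `α` is. -/
def sat (s : Set Clause) : Form → Prop
  | .atom t n => UP s {Lit.pos t n}
  | .not (.atom t n) => UP s {Lit.neg t n}
  | .not (.not φ) => sat s φ
  | .not (.or φ ψ) => sat s (.not φ) ∧ sat s (.not ψ)
  | .or φ ψ => if (Form.or φ ψ).isClause then UP s (Form.or φ ψ).lits
               else sat s φ ∨ sat s ψ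

/-- `satB s k α` is `s ⊨ˢ B_k α`: `B₀ α` holds iff `α` does, and `B_{k+1} α`
holds iff for some function term `t`, for all names `n`,
`s ∪ {t ≈ n} ⊨ˢ B_k α`. -/
def satB (s : Set Clause) : ℕ → Form → Prop
  | 0, φ => sat s φ
  | k+1, φ => ∃ t : FnTerm, ∀ n : Name, satB (s ∪ {({Lit.pos t n} : Clause)}) k φ

/-- A world maps function terms to standard names. -/
abbrev World := FnTerm → Name

/-- Classical truth of a literal in a world. -/
def Lit.holds (w : World) : Lit → Prop
  | .pos t n => w t = n
  | .neg t n => w t ≠ n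

/-- Classical truth of a clause in a world. -/
def Clause.holds (w : World) (c : Clause) : Prop := ∃ ℓ ∈ c, ℓ.holds w

/-- Classical truth of an objective formula in a world. -/
def wsat (w : World) : Form → Prop
  | .atom t n => w t = n
  | .not φ => ¬ wsat w φ
  | .or φ ψ => wsat w φ ∨ wsat w ψ

/-- Classical entailment `s ⊨ α`. -/
def entails (s : Set Clause) (φ : Form) : Prop :=
  ∀ w : World, (∀ c ∈ s, c.holds w) → wsat w φ

/-- Classical entailment of a clause (disjunction of its literals). -/
def entailsClause (s : Set Clause) (c : Clause) : Prop :=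
  ∀ w : World, (∀ c' ∈ s, c'.holds w) → c.holds w

/-- Function terms mentioned in a formula. -/
def Form.terms : Form → Finset FnTerm
  | .atom t _ => {t}
  | .not φ => φ.terms
  | .or φ ψ => φ.terms ∪ ψ.terms

/-- Standard names mentioned in a formula. -/
def Form.names : Form → Finset Name
  | .atom t n => insert n t.args.toFinset
  | .not φ => φ.names
  | .or φ ψ => φ.names ∪ ψ.names
/-- CNF formulas: clauses, or conjunctions of CNF formulas. -/
inductive IsCNF : Form → Prop
  | clause {φ : Form} : φ.isClause = true → IsCNF φ
  | and {φ ψ : Form} : IsCNF φ → IsCNF ψ → IsCNF (Form.and φ ψ)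

/-- The set of clauses of a CNF formula. -/
def Form.cnfClauses : Form → Set Clause
  | .not (.or (.not φ) (.not ψ)) => φ.cnfClauses ∪ ψ.cnfClauses
  | φ => if φ.isClause then {φ.lits} else ∅

/-- The formula corresponding to a literal. -/
def Lit.toForm : Lit → Form
  | .pos t n => .atom t n
  | .neg t n => .not (.atom t n)

/-- `⋁_{ℓ ∈ ls} ℓ ∨ base`. -/
def Form.bigOrLits (ls : List Lit) (base : Form) : Form :=
  ls.foldr (fun ℓ acc => Form.or ℓ.toForm acc) base

/-- The disjunction of a nonempty list of literals (junk on the empty list). -/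
def Form.bigOr : List Lit → Form
  | [] => Form.atom default 0
  | [ℓ] => ℓ.toForm
  | ℓ :: ℓ' :: ls => Form.or ℓ.toForm (Form.bigOr (ℓ' :: ls))

/-- The split-early gadget `s_k`: the least set including `s` that, for every
`ℓ ∈ L`, contains the clauses `¬ℓ ∨ c^ord`, `ℓ ∨ ℓʷ₁ ∨ … ∨ ℓʷ_{k-1} ∨ c^ord`,
and `ℓ ∨ ¬ℓʷ_i ∨ c^ord` for each `i`, where `c^ord = ℓᵒ₁ ∨ … ∨ ℓᵒ_k`. -/
def gadget (s : Set Clause) (L : List Lit) (lws los : List Lit) : Set Clause :=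
  s ∪ {c | ∃ ℓ ∈ L,
        c = insert ℓ.negate los.toFinset ∨
        c = insert ℓ (lws.toFinset ∪ los.toFinset) ∨
        ∃ ℓw ∈ lws, c = insert ℓ (insert ℓw.negate los.toFinset)}

theorem UP.weaken {s : Set Clause} {c d : Clause} (h : UP s c) (hcd : c ⊆ d) : UP s d :=
  UP.sub h ⟨fun _ _ hm => Or.inl (hcd hm), fun _ _ hm => hcd hm⟩

theorem UP.mono' {s s' : Set Clause} (hss : s ⊆ s') {c : Clause} (h : UP s c) : UP s' c := by
  induction h with
  | mem h => exact UP.mem (hss h)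
  | unit _ _ ih1 ih2 => exact UP.unit ih1 ih2
  | sub _ h ih => exact UP.sub ih h

theorem UP.resolve {s : Set Clause} {ℓ u : Lit} {c : Clause} (h : UP s (insert ℓ c))
    (hu : UP s {u}) (hc : Lit.complementary ℓ u = true) : UP s c := by
  refine (UP.unit hu h).weaken ?_
  intro x hx
  simp only [Clause.prop, Finset.mem_filter, Finset.mem_insert] at hx
  rcases hx with ⟨rfl | hx, h2⟩
  · simp [hc] at h2
  · exact hx

theorem Lit.compl_cases (ℓ : Lit) (n : Name) :
    Lit.complementary ℓ (.pos ℓ.lhs n) = true ∨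
    Lit.complementary ℓ.negate (.pos ℓ.lhs n) = true := by
  cases ℓ with
  | pos t m => by_cases h : m = n <;> simp [Lit.complementary, Lit.lhs, Lit.negate, h]
  | neg t m => by_cases h : m = n <;> simp [Lit.complementary, Lit.lhs, Lit.negate, h]

theorem Lit.toForm_isClause (ℓ : Lit) : ℓ.toForm.isClause = true := by
  cases ℓ <;> simp [Lit.toForm, Form.isClause]

theorem Lit.toForm_lits (ℓ : Lit) : ℓ.toForm.lits = {ℓ} := by
  cases ℓ <;> simp [Lit.toForm, Form.lits]

theorem bigOr_isClause (ls : List Lit) : (Form.bigOr ls).isClause = true := by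
  induction ls with
  | nil => simp [Form.bigOr, Form.isClause]
  | cons a l ih =>
    cases l with
    | nil => simpa [Form.bigOr] using Lit.toForm_isClause a
    | cons b l => simp only [Form.bigOr, Form.isClause, Lit.toForm_isClause, ih, Bool.and_self]

theorem bigOr_lits (ls : List Lit) (h : ls ≠ []) : (Form.bigOr ls).lits = ls.toFinset := by
  induction ls with
  | nil => exact absurd rfl h
  | cons a l ih =>
    cases l with
    | nil => simpa [Form.bigOr] using Lit.toForm_lits a
    | cons b l =>
      rw [Form.bigOr, Form.lits, Lit.toForm_lits, ih (by simp), List.toFinset_cons (a := a)]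
      rfl

theorem sat_of_isClause (s : Set Clause) (φ : Form) (h : φ.isClause = true)
    (hu : UP s φ.lits) : sat s φ := by
  cases φ with
  | atom t n => simpa [sat, Form.lits] using hu
  | not φ =>
    cases φ with
    | atom t n => simpa [sat, Form.lits] using hu
    | not _ => simp [Form.isClause] at h
    | or _ _ => simp [Form.isClause] at h
  | or φ ψ => rw [sat, if_pos h]; exact hu

theorem satB_split (los : List Lit) (hl : los ≠ []) (lws : List Lit) :
    ∀ S : Set Clause, UP S (lws.toFinset ∪ los.toFinset) →
      (∀ ℓw ∈ lws, UP S (insert ℓw.negate los.toFinset)) →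
      satB S lws.length (Form.bigOr los) := by
  induction lws with
  | nil =>
    intro S h _
    refine sat_of_isClause S _ (bigOr_isClause los) ?_
    rw [bigOr_lits los hl]
    simpa using h
  | cons a l ih =>
    intro S h h2
    refine ⟨a.lhs, fun n => ?_⟩
    have hsub : S ⊆ S ∪ {({Lit.pos a.lhs n} : Clause)} := Set.subset_union_left
    have hu : UP (S ∪ {({Lit.pos a.lhs n} : Clause)}) {Lit.pos a.lhs n} := UP.mem (Or.inr rfl)
    refine ih _ ?_ (fun ℓw hw => (h2 ℓw (List.mem_cons_of_mem _ hw)).mono' hsub)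
    rcases Lit.compl_cases a n with hc | hc
    · refine UP.resolve (ℓ := a) ?_ hu hc
      have := h.mono' hsub
      rwa [List.toFinset_cons, Finset.insert_union] at this
    · exact (UP.resolve ((h2 a List.mem_cons_self).mono' hsub) hu hc).weaken
        Finset.subset_union_right

/-- **Claim 3 in the split-early gadget**: for every `t ∈ F` and every name
`n`, `s_k ∪ {t ≈ n} ⊨ˢ B_{k-1} c^ord_k`. -/
theorem split_early_gadget_claim3
    (F : Finset FnTerm) (hF : F.Nonempty)
    (L : List Lit)
    (hLF : ∀ ℓ ∈ L, Lit.lhs ℓ ∈ F)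
    (hFL : ∀ t ∈ F, ∃! ℓ, ℓ ∈ L ∧ Lit.lhs ℓ = t)
    (α : Form) (k : ℕ) (hk : 1 ≤ k)
    (s : Set Clause)
    (hs : ∀ t : FnTerm, t ∉ F → ∃ n : Name,
        ¬ entailsClause (s ∪ {({Lit.pos t n} : Clause)}) L.toFinset ∧
        ¬ entailsClause (s ∪ {({Lit.pos t n} : Clause)}) (L.map Lit.negate).toFinset)
    (lws los : List Lit)
    (hlws : lws.length = k - 1) (hlos : los.length = k)
    (hauxNodup : ((lws ++ los).map Lit.lhs).Nodup)
    (hauxFresh : ∀ ℓ' ∈ lws ++ los,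
        (∀ c ∈ s, ∀ ℓ'' ∈ c, Lit.lhs ℓ'' ≠ Lit.lhs ℓ') ∧ Lit.lhs ℓ' ∉ α.terms)
    :
    ∀ t ∈ F, ∀ n : Name,
      satB ((gadget s L lws los) ∪ {({Lit.pos t n} : Clause)}) (k - 1)
        (Form.bigOr los) := by
  intro t ht n
  obtain ⟨ℓ, ⟨hℓ, rfl⟩, -⟩ := hFL t ht
  have hl : los ≠ [] := by
    rintro rfl
    simp at hlos
    omega
  rw [← hlws]
  have hu : UP ((gadget s L lws los) ∪ {({Lit.pos ℓ.lhs n} : Clause)}) {Lit.pos ℓ.lhs n} :=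
    UP.mem (Or.inr rfl)
  rcases Lit.compl_cases ℓ n with hc | hc
  · refine satB_split los hl lws _ ?_ ?_
    · exact UP.resolve (UP.mem (Or.inl (Or.inr ⟨ℓ, hℓ, Or.inr (Or.inl rfl)⟩))) hu hc
    · intro ℓw hw
      exact UP.resolve (UP.mem (Or.inl (Or.inr ⟨ℓ, hℓ, Or.inr (Or.inr ⟨ℓw, hw, rfl⟩)⟩))) hu hc
  · have h : UP ((gadget s L lws los) ∪ {({Lit.pos ℓ.lhs n} : Clause)}) los.toFinset :=
      UP.resolve (UP.mem (Or.inl (Or.inr ⟨ℓ, hℓ, Or.inl rfl⟩))) hu hc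
    exact satB_split los hl lws _ (h.weaken Finset.subset_union_right)
      (fun ℓw _ => h.weaken (Finset.subset_insert _ _))
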